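/- Let x, y be probability vectors of dimension d, sorted in nonincreasing order, with strictly positive entries. Define P_M(x → y) = sup_{m ≥ 1} [P(x^{⊗m} → y^{⊗m})]^{1/m} and P_C(x → y) = sup_c P(x⊗c → y⊗c), where the supremum in P_C ranges over all probability vectors c (of arbitrary finite dimension) with strictly positive entries, and x^{⊗m} denotes the m-fold tensor power. Then P_M(x → y) = P_C(x → y). -/

import Mathlib

/-- The sum of the `k` largest entries of a vector (equivalently, for vectors with
nonnegative entries, the maximum of `∑ i ∈ s, x i` over subsets `s` of cardinality at
most `k`; this also accounts for padding with zeros). -/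
noncomputable def topSum {ι : Type*} [Fintype ι] [DecidableEq ι] (x : ι → ℝ) (k : ℕ) : ℝ :=
  ((Finset.univ : Finset ι).powerset.filter (fun s => s.card ≤ k)).sup'
    ⟨∅, by simp⟩ (fun s => ∑ i ∈ s, x i)

/-- A probability vector: nonnegative entries summing to 1. -/
def IsProbVec {ι : Type*} [Fintype ι] (x : ι → ℝ) : Prop :=
  (∀ i, 0 ≤ x i) ∧ ∑ i, x i = 1

/-- `x ≺ y` (majorization, after padding with zeros to a common dimension): every partial
sum of the `k` largest entries of `x` is at most that of `y`, with equal total sums. -/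
def PMaj {ι κ : Type*} [Fintype ι] [DecidableEq ι] [Fintype κ] [DecidableEq κ]
    (x : ι → ℝ) (y : κ → ℝ) : Prop :=
  (∀ k : ℕ, topSum x k ≤ topSum y k) ∧ (∑ i, x i = ∑ j, y j)

/-- Tensor product of two vectors: `(x ⊗ y)_{(i,j)} = x_i y_j`. -/
def pvTensor {ι κ : Type*} (x : ι → ℝ) (y : κ → ℝ) : ι × κ → ℝ :=
  fun p => x p.1 * y p.2

/-- The optimal conversion probability
`P(v → w) = min_{0 ≤ n ≤ D-1} (∑_{i=n}^{D-1} v↓_i) / (∑_{i=n}^{D-1} w↓_i)`,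
where the tail sum of the `D - n` smallest entries is the total sum minus the sum of the
`n` largest entries. -/
noncomputable def Pconv {ι : Type*} [Fintype ι] [DecidableEq ι] [Nonempty ι]
    (v w : ι → ℝ) : ℝ :=
  (Finset.range (Fintype.card ι)).inf' (Finset.nonempty_range_iff.mpr Fintype.card_ne_zero)
    (fun n => (∑ i, v i - topSum v n) / (∑ i, w i - topSum w n))

/-- The `m`-fold tensor power of a vector, indexed by tuples `Fin m → Fin d`. -/
def pvPow {d : ℕ} (x : Fin d → ℝ) (m : ℕ) : (Fin m → Fin d) → ℝ :=
  fun f => ∏ j, x (f j)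

/-- The excess functional `t ↦ ∑ i, (t - v i)⁺`, which determines weak supermajorization. -/
noncomputable def excess {ι : Type*} [Fintype ι] (v : ι → ℝ) (t : ℝ) : ℝ :=
  ∑ i, max (t - v i) 0

section excess

variable {ι κ : Type*} [Fintype ι] [Fintype κ]

theorem excess_comp_equiv (e : κ ≃ ι) (v : ι → ℝ) (t : ℝ) :
    excess (fun k => v (e k)) t = excess v t :=
  e.sum_comp (fun i => max (t - v i) 0)

theorem excess_prod (v : ι × κ → ℝ) (t : ℝ) :
    excess v t = ∑ i, excess (fun k => v (i, k)) t :=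
  Fintype.sum_prod_type _

theorem excess_smul {a : ℝ} (ha : 0 < a) (v : ι → ℝ) (t : ℝ) :
    excess (fun i => a * v i) t = a * excess v (t / a) := by
  unfold excess
  rw [Finset.mul_sum]
  refine Finset.sum_congr rfl fun i _ => ?_
  rw [mul_max_of_nonneg _ _ ha.le, mul_zero, mul_sub, mul_div_cancel₀ _ ha.ne']

theorem excess_anti {v w : ι → ℝ} (h : ∀ i, v i ≤ w i) (t : ℝ) : excess w t ≤ excess v t :=
  Finset.sum_le_sum fun i _ => max_le_max (by linarith [h i]) le_rfl

theorem excess_smul_le {a : ℝ} (ha : 0 < a) {v w : ι → ℝ}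
    (h : ∀ t, excess v t ≤ excess w t) (t : ℝ) :
    excess (fun i => a * v i) t ≤ excess (fun i => a * w i) t := by
  rw [excess_smul ha, excess_smul ha]
  exact mul_le_mul_of_nonneg_left (h _) ha.le

/-- Domination of excess functionals is preserved by tensoring with a positive vector. -/
theorem excess_tensor_le {z : κ → ℝ} (hz : ∀ k, 0 < z k) {v w : ι → ℝ}
    (h : ∀ t, excess v t ≤ excess w t) (t : ℝ) :
    excess (fun p : κ × ι => z p.1 * v p.2) t ≤ excess (fun p : κ × ι => z p.1 * w p.2) t := by
  rw [excess_prod, excess_prod]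
  exact Finset.sum_le_sum fun k _ => excess_smul_le (hz k) h t

end excess

section Pconv

variable {ι : Type*} [Fintype ι] [DecidableEq ι]

theorem sum_le_topSum (v : ι → ℝ) {n : ℕ} {s : Finset ι} (hs : s.card ≤ n) :
    ∑ i ∈ s, v i ≤ topSum v n := by
  unfold topSum
  exact Finset.le_sup' (fun s => ∑ i ∈ s, v i) (by simpa using hs)

theorem exists_topSum_eq (v : ι → ℝ) (n : ℕ) :
    ∃ s : Finset ι, s.card ≤ n ∧ topSum v n = ∑ i ∈ s, v i := by
  unfold topSum
  obtain ⟨s, hs, h⟩ := Finset.exists_mem_eq_sup'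
    (s := (Finset.univ : Finset ι).powerset.filter (fun s => s.card ≤ n))
    ⟨∅, by simp⟩ (fun s => ∑ i ∈ s, v i)
  exact ⟨s, by simpa using hs, h⟩

theorem exists_tail_eq (v : ι → ℝ) (n : ℕ) :
    ∃ s : Finset ι, s.card ≤ n ∧ ∑ i, v i - topSum v n = ∑ i ∈ sᶜ, v i := by
  obtain ⟨s, hs, h⟩ := exists_topSum_eq v n
  exact ⟨s, hs, by rw [h, ← Finset.sum_add_sum_compl s]; ring⟩

theorem tail_le (v : ι → ℝ) {n : ℕ} {s : Finset ι} (hs : s.card ≤ n) :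
    ∑ i, v i - topSum v n ≤ ∑ i ∈ sᶜ, v i := by
  rw [← Finset.sum_add_sum_compl s]
  linarith [sum_le_topSum v hs]

theorem tail_nonneg {v : ι → ℝ} (hv : ∀ i, 0 ≤ v i) (n : ℕ) : 0 ≤ ∑ i, v i - topSum v n := by
  obtain ⟨s, -, h⟩ := exists_tail_eq v n
  rw [h]
  exact Finset.sum_nonneg fun i _ => hv i

theorem tail_pos {v : ι → ℝ} (hv : ∀ i, 0 < v i) {n : ℕ} (hn : n < Fintype.card ι) :
    0 < ∑ i, v i - topSum v n := by
  obtain ⟨s, hs, h⟩ := exists_tail_eq v n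
  rw [h]
  refine Finset.sum_pos (fun i _ => hv i) (Finset.card_pos.mp ?_)
  rw [Finset.card_compl]
  omega

theorem linear_sub_tail_le_excess (v : ι → ℝ) (n : ℕ) {t : ℝ} (ht : 0 ≤ t) :
    ((Fintype.card ι : ℝ) - n) * t - (∑ i, v i - topSum v n) ≤ excess v t := by
  obtain ⟨s, hs, h⟩ := exists_tail_eq v n
  rw [h]
  have hcard : (Fintype.card ι : ℝ) - n ≤ (sᶜ.card : ℝ) := by
    have hsum := Finset.card_add_card_compl s
    have hsn : (s.card : ℝ) ≤ n := by exact_mod_cast hs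
    rw [← hsum]
    push_cast
    linarith
  calc ((Fintype.card ι : ℝ) - n) * t - ∑ i ∈ sᶜ, v i
      ≤ sᶜ.card * t - ∑ i ∈ sᶜ, v i := by gcongr
    _ = ∑ i ∈ sᶜ, (t - v i) := by simp [Finset.sum_sub_distrib]
    _ ≤ ∑ i ∈ sᶜ, max (t - v i) 0 := Finset.sum_le_sum fun i _ => le_max_left _ _
    _ ≤ excess v t := Finset.sum_le_univ_sum_of_nonneg fun i => le_max_right _ _

theorem excess_eq_of_threshold (v : ι → ℝ) (s : Finset ι) {t : ℝ} (h₁ : ∀ i ∈ s, t ≤ v i)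
    (h₂ : ∀ i ∈ sᶜ, v i ≤ t) :
    excess v t = ((Fintype.card ι : ℝ) - s.card) * t - ∑ i ∈ sᶜ, v i := by
  unfold excess
  have hcard : (Fintype.card ι : ℝ) - s.card = (sᶜ.card : ℝ) := by
    rw [← Finset.card_add_card_compl s]
    push_cast
    ring
  rw [← Finset.sum_add_sum_compl s,
    Finset.sum_eq_zero fun i hi => max_eq_right (by linarith [h₁ i hi]), zero_add,
    Finset.sum_congr rfl fun i hi => max_eq_left (by linarith [h₂ i hi]), hcard]
  simp [Finset.sum_sub_distrib]

theorem exists_top_finset (v : ι → ℝ) {n : ℕ} (hn : n ≤ Fintype.card ι) :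
    ∃ s : Finset ι, s.card = n ∧ ∀ i ∈ s, ∀ j ∈ sᶜ, v j ≤ v i := by
  induction n with
  | zero => exact ⟨∅, by simp⟩
  | succ n ih =>
    obtain ⟨s, hs, h⟩ := ih (by omega)
    have hne : sᶜ.Nonempty := Finset.card_pos.mp (by rw [Finset.card_compl]; omega)
    obtain ⟨a, ha, hmax⟩ := Finset.exists_max_image sᶜ v hne
    refine ⟨insert a s, by rw [Finset.card_insert_of_notMem (by simpa using ha), hs], ?_⟩
    intro i hi j hj
    have hj' : j ∈ sᶜ := by simp at hj ⊢; exact hj.2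
    rcases Finset.mem_insert.mp hi with rfl | hi
    · exact hmax j hj'
    · exact h i hi j hj'

theorem exists_excess_le (v : ι → ℝ) (hv : ∀ i, 0 ≤ v i) {n : ℕ} (hn : n < Fintype.card ι) :
    ∃ t, 0 ≤ t ∧
      excess v t ≤ ((Fintype.card ι : ℝ) - n) * t - (∑ i, v i - topSum v n) := by
  obtain ⟨s, hs, h⟩ := exists_top_finset v hn.le
  have hne : sᶜ.Nonempty := Finset.card_pos.mp (by rw [Finset.card_compl]; omega)
  obtain ⟨a, ha, hmax⟩ := Finset.exists_max_image sᶜ v hne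
  refine ⟨v a, hv a, ?_⟩
  rw [excess_eq_of_threshold v s (fun i hi => h i hi a ha) hmax, hs]
  linarith [tail_le v hs.le]

theorem topSum_smul {a : ℝ} (ha : 0 ≤ a) (v : ι → ℝ) (n : ℕ) :
    topSum (fun i => a * v i) n = a * topSum v n := by
  apply le_antisymm
  · obtain ⟨s, hs, h⟩ := exists_topSum_eq (fun i => a * v i) n
    rw [h, ← Finset.mul_sum]
    exact mul_le_mul_of_nonneg_left (sum_le_topSum v hs) ha
  · obtain ⟨s, hs, h⟩ := exists_topSum_eq v n
    rw [h, Finset.mul_sum]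
    exact sum_le_topSum (fun i => a * v i) hs

theorem tail_le_tail_iff_excess_le {v w : ι → ℝ} (hv : ∀ i, 0 ≤ v i) (hw : ∀ i, 0 ≤ w i) :
    (∀ n < Fintype.card ι, ∑ i, w i - topSum w n ≤ ∑ i, v i - topSum v n) ↔
      ∀ t, excess v t ≤ excess w t := by
  constructor
  · intro h t
    rcases lt_or_ge t 0 with ht | ht
    · have hzero : excess v t = 0 :=
        Finset.sum_eq_zero fun i _ => max_eq_right (by linarith [hv i])
      rw [hzero]
      exact Finset.sum_nonneg fun i _ => le_max_right _ _
    · set s : Finset ι := Finset.univ.filter fun i => t ≤ v i with hs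
      have hcard : s.card ≤ Fintype.card ι := Finset.card_le_univ s
      have htail : ∑ i, w i - topSum w s.card ≤ ∑ i, v i - topSum v s.card := by
        rcases hcard.lt_or_eq with hlt | heq
        · exact h _ hlt
        · have hle := tail_le w (s := Finset.univ) (n := s.card) (by simp [heq])
          simp only [Finset.compl_univ, Finset.sum_empty] at hle
          exact hle.trans (tail_nonneg hv _)
      rw [excess_eq_of_threshold v s (by simp [hs]) (by simp [hs]; intro i hi; exact hi.le)]
      linarith [linear_sub_tail_le_excess w s.card ht, tail_le v (le_refl s.card)]
  · intro h n hn
    obtain ⟨t, ht, hle⟩ := exists_excess_le w hw hn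
    linarith [linear_sub_tail_le_excess v n ht, h t]

variable [Nonempty ι]

theorem le_Pconv_iff {v w : ι → ℝ} (hv : ∀ i, 0 ≤ v i) (hw : ∀ i, 0 < w i) {a : ℝ}
    (ha : 0 ≤ a) :
    a ≤ Pconv v w ↔ ∀ t, excess v t ≤ excess (fun i => a * w i) t := by
  rw [← tail_le_tail_iff_excess_le hv fun i => mul_nonneg ha (hw i).le]
  unfold Pconv
  rw [Finset.le_inf'_iff]
  simp only [Finset.mem_range]
  refine forall₂_congr fun n hn => ?_
  rw [le_div_iff₀ (tail_pos hw hn), topSum_smul ha, ← Finset.mul_sum, mul_sub]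

theorem Pconv_pos {v w : ι → ℝ} (hv : ∀ i, 0 < v i) (hw : ∀ i, 0 < w i) : 0 < Pconv v w := by
  unfold Pconv
  rw [Finset.lt_inf'_iff]
  intro n hn
  rw [Finset.mem_range] at hn
  exact div_pos (tail_pos hv hn) (tail_pos hw hn)

theorem Pconv_le_one {v w : ι → ℝ} (hv : ∑ i, v i = 1) (hw : ∑ i, w i = 1) :
    Pconv v w ≤ 1 := by
  have hzero : ∀ u : ι → ℝ, topSum u 0 = 0 := fun u => by
    obtain ⟨s, hs, h⟩ := exists_topSum_eq u 0
    rw [h, Finset.card_eq_zero.mp (Nat.le_zero.mp hs), Finset.sum_empty]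
  unfold Pconv
  refine (Finset.inf'_le _ (Finset.mem_range.mpr Fintype.card_pos)).trans ?_
  simp [hzero, hv, hw]

end Pconv

theorem pvPow_pos {d : ℕ} {x : Fin d → ℝ} (hx : ∀ i, 0 < x i) (m : ℕ) (f : Fin m → Fin d) :
    0 < pvPow x m f :=
  Finset.prod_pos fun _ _ => hx _

theorem sum_pvPow {d : ℕ} (x : Fin d → ℝ) (m : ℕ) : ∑ f, pvPow x m f = (∑ i, x i) ^ m := by
  simp [pvPow, Finset.sum_pow']

theorem pvTensor_pos {ι κ : Type*} {x : ι → ℝ} {y : κ → ℝ} (hx : ∀ i, 0 < x i)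
    (hy : ∀ j, 0 < y j) (p : ι × κ) : 0 < pvTensor x y p :=
  mul_pos (hx _) (hy _)

theorem sum_pvTensor {ι κ : Type*} [Fintype ι] [Fintype κ] (x : ι → ℝ) (y : κ → ℝ) :
    ∑ p, pvTensor x y p = (∑ i, x i) * ∑ j, y j := by
  rw [Fintype.sum_prod_type, Finset.sum_mul_sum]
  rfl

/-- A positive, possibly unnormalized catalyst over any finite type can be replaced by a
positive probability vector indexed by `Fin (k + 1)`. -/
theorem exists_catalyst_of_excess_le {ι κ : Type*} [Fintype ι] [DecidableEq ι] [Nonempty ι]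
    [Fintype κ] [Nonempty κ]
    {x y : ι → ℝ} (hx : ∀ i, 0 < x i) (hy : ∀ i, 0 < y i) {a : ℝ} (ha : 0 ≤ a) {c : κ → ℝ}
    (hc : ∀ k, 0 < c k)
    (h : ∀ t, excess (fun p : ι × κ => x p.1 * c p.2) t ≤
      excess (fun p : ι × κ => a * (y p.1 * c p.2)) t) :
    ∃ (k : ℕ) (c' : Fin (k + 1) → ℝ), IsProbVec c' ∧ (∀ j, 0 < c' j) ∧
      a ≤ Pconv (pvTensor x c') (pvTensor y c') := by
  obtain ⟨k, hk⟩ := Nat.exists_eq_succ_of_ne_zero (Fintype.card_ne_zero (α := κ))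
  let e : Fin (k + 1) ≃ κ := (Fintype.equivFinOfCardEq hk).symm
  have hS : 0 < ∑ k, c k := Finset.sum_pos (fun k _ => hc k) Finset.univ_nonempty
  set b : ℝ := (∑ k, c k)⁻¹
  have hb : 0 < b := inv_pos.mpr hS
  have hpos : ∀ j, 0 < b * c (e j) := fun j => mul_pos hb (hc _)
  refine ⟨k, fun j => b * c (e j), ⟨fun j => (hpos j).le, ?_⟩, hpos, ?_⟩
  · rw [← Finset.mul_sum, e.sum_comp c]
    exact inv_mul_cancel₀ hS.ne'
  · rw [le_Pconv_iff (fun p => (pvTensor_pos hx hpos p).le) (pvTensor_pos hy hpos) ha]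
    intro t
    have hscale := excess_smul_le hb h t
    rw [← excess_comp_equiv ((Equiv.refl ι).prodCongr e),
      ← excess_comp_equiv ((Equiv.refl ι).prodCongr e)] at hscale
    convert hscale using 3 <;> simp [pvTensor] <;> ring

/-- The weighted product vector `a ^ i • (y ^ ⊗ i ⊗ x ^ ⊗ (m - i))`. -/
noncomputable def mixedPow {d : ℕ} (a : ℝ) (x y : Fin d → ℝ) (m i : ℕ) : (Fin m → Fin d) → ℝ :=
  fun f => a ^ i * ∏ j : Fin m, if (j : ℕ) < i then y (f j) else x (f j)

theorem mixedPow_pos {d : ℕ} {a : ℝ} (ha : 0 < a) {x y : Fin d → ℝ} (hx : ∀ i, 0 < x i)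
    (hy : ∀ i, 0 < y i) (m i : ℕ) (f : Fin m → Fin d) : 0 < mixedPow a x y m i f := by
  refine mul_pos (pow_pos ha i) (Finset.prod_pos fun j _ => ?_)
  split_ifs
  exacts [hy _, hx _]

theorem excess_tensor_mixedPow_left {d : ℕ} (a : ℝ) (x y : Fin d → ℝ) (m i : ℕ) (hi : i ≤ m)
    (t : ℝ) :
    excess (fun p : Fin d × (Fin m → Fin d) => x p.1 * mixedPow a x y m i p.2) t =
      excess (mixedPow a x y (m + 1) i) t := by
  rw [← excess_comp_equiv (Fin.snocEquiv fun _ : Fin (m + 1) => Fin d)]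
  congr 1
  funext p
  simp only [mixedPow, Fin.prod_univ_castSucc, Fin.snocEquiv_apply, Fin.snoc_castSucc,
    Fin.snoc_last, Fin.val_castSucc, Fin.val_last, not_lt.mpr hi, if_false]
  ring

theorem excess_tensor_mixedPow_right {d : ℕ} (a : ℝ) (x y : Fin d → ℝ) (m i : ℕ) (t : ℝ) :
    excess (fun p : Fin d × (Fin m → Fin d) => a * (y p.1 * mixedPow a x y m i p.2)) t =
      excess (mixedPow a x y (m + 1) (i + 1)) t := by
  rw [← excess_comp_equiv (Fin.consEquiv fun _ : Fin (m + 1) => Fin d)]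
  congr 1
  funext p
  simp only [mixedPow, Fin.prod_univ_succ, Fin.consEquiv_apply, Fin.cons_succ, Fin.cons_zero,
    Fin.val_succ, Fin.val_zero, Nat.succ_pos, if_true, Nat.add_lt_add_iff_right]
  ring

theorem excess_prod_right {ι κ μ : Type*} [Fintype ι] [Fintype κ] [Fintype μ]
    (v : ι × (κ × μ) → ℝ) (t : ℝ) :
    excess v t = ∑ k, excess (fun p : ι × μ => v (p.1, (k, p.2))) t := by
  simp only [excess, Fintype.sum_prod_type]
  exact Finset.sum_comm

/-- A multiple-copy transformation yields a catalyst, of the form `⨁ i, a ^ i • y ^ ⊗ i ⊗ x ^ ⊗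
(m - i)`, achieving the same average rate. -/
theorem exists_catalyst_of_multicopy {d : ℕ} {x y : Fin (d + 1) → ℝ} (hx : ∀ i, 0 < x i)
    (hy : ∀ i, 0 < y i) (m : ℕ) {a : ℝ} (ha : 0 < a)
    (h : a ^ (m + 1) ≤ Pconv (pvPow x (m + 1)) (pvPow y (m + 1))) :
    ∃ (k : ℕ) (c : Fin (k + 1) → ℝ), IsProbVec c ∧ (∀ j, 0 < c j) ∧
      a ≤ Pconv (pvTensor x c) (pvTensor y c) := by
  refine exists_catalyst_of_excess_le (κ := Fin (m + 1) × (Fin m → Fin (d + 1))) hx hy ha.le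
    (c := fun q => mixedPow a x y m q.1 q.2) (fun q => mixedPow_pos ha hx hy _ _ _) fun t => ?_
  rw [le_Pconv_iff (fun f => (pvPow_pos hx _ f).le) (pvPow_pos hy _) (pow_pos ha _).le] at h
  rw [excess_prod_right, excess_prod_right]
  simp only [excess_tensor_mixedPow_right]
  rw [Finset.sum_congr rfl fun (i : Fin (m + 1)) _ =>
    excess_tensor_mixedPow_left a x y m i (Nat.lt_succ_iff.mp i.2) t,
    Fin.sum_univ_eq_sum_range (fun i => excess (mixedPow a x y (m + 1) i) t),
    Fin.sum_univ_eq_sum_range (fun i => excess (mixedPow a x y (m + 1) (i + 1)) t)]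
  have hfirst : mixedPow a x y (m + 1) 0 = pvPow x (m + 1) := by
    funext f
    simp [mixedPow, pvPow]
  have hlast : mixedPow a x y (m + 1) (m + 1) = fun f => a ^ (m + 1) * pvPow y (m + 1) f := by
    funext f
    simp only [mixedPow, pvPow, Fin.is_lt, if_true]
  have htele := (Finset.sum_range_succ (fun i => excess (mixedPow a x y (m + 1) i) t)
    (m + 1)).symm.trans (Finset.sum_range_succ' _ _)
  rw [hfirst, hlast] at htele
  linarith [h t]

theorem excess_pvPow_succ_tensor {d : ℕ} {κ : Type*} [Fintype κ] (b : ℝ) (x : Fin d → ℝ)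
    (m : ℕ) (c : κ → ℝ) (t : ℝ) :
    excess (fun p : (Fin (m + 1) → Fin d) × κ => b * (pvPow x (m + 1) p.1 * c p.2)) t =
      excess (fun p : Fin d × ((Fin m → Fin d) × κ) =>
        b * (x p.1 * (pvPow x m p.2.1 * c p.2.2))) t := by
  rw [← excess_comp_equiv ((Equiv.prodAssoc _ _ _).symm.trans
    ((Fin.consEquiv fun _ : Fin (m + 1) => Fin d).prodCongr (Equiv.refl κ)))]
  congr 1
  funext p
  simp only [pvPow, Fin.prod_univ_succ, Equiv.trans_apply, Equiv.prodAssoc_symm_apply,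
    Equiv.prodCongr_apply, Prod.map, Fin.consEquiv_apply, Fin.cons_zero, Fin.cons_succ,
    Equiv.refl_apply]
  ring

/-- A catalyst can be reused: `m` successive transformations succeed with probability `a ^ m`. -/
theorem excess_pvPow_tensor_le {d : ℕ} {κ : Type*} [Fintype κ] {x y : Fin d → ℝ}
    (hx : ∀ i, 0 < x i) (hy : ∀ i, 0 < y i) {a : ℝ} (ha : 0 < a) {c : κ → ℝ}
    (h : ∀ t, excess (fun p : Fin d × κ => x p.1 * c p.2) t ≤
      excess (fun p : Fin d × κ => a * (y p.1 * c p.2)) t) (m : ℕ) (t : ℝ) :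
    excess (fun p : (Fin m → Fin d) × κ => pvPow x m p.1 * c p.2) t ≤
      excess (fun p : (Fin m → Fin d) × κ => a ^ m * (pvPow y m p.1 * c p.2)) t := by
  induction m generalizing t with
  | zero => simp [pvPow]
  | succ m ih =>
    have hreorder : ∀ (b : ℝ) (z : Fin d → ℝ),
        excess (fun p : (Fin m → Fin d) × (Fin d × κ) =>
          pvPow x m p.1 * (b * (z p.2.1 * c p.2.2))) t =
          excess (fun p : Fin d × ((Fin m → Fin d) × κ) =>
            (b * z p.1) * (pvPow x m p.2.1 * c p.2.2)) t := by
      intro b z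
      simp only [excess, Fintype.sum_prod_type]
      rw [Finset.sum_comm]
      refine Finset.sum_congr rfl fun _ _ => Finset.sum_congr rfl fun _ _ =>
        Finset.sum_congr rfl fun _ _ => ?_
      ring_nf
    have hstart := excess_pvPow_succ_tensor 1 x m c t
    simp only [one_mul] at hstart
    calc excess (fun p : (Fin (m + 1) → Fin d) × κ => pvPow x (m + 1) p.1 * c p.2) t
        = excess (fun p : (Fin m → Fin d) × (Fin d × κ) =>
            pvPow x m p.1 * (x p.2.1 * c p.2.2)) t := by
          rw [hstart]
          simpa only [one_mul] using (hreorder 1 x).symm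
      _ ≤ excess (fun p : (Fin m → Fin d) × (Fin d × κ) =>
            pvPow x m p.1 * (a * (y p.2.1 * c p.2.2))) t :=
          excess_tensor_le (pvPow_pos hx m) h t
      _ = excess (fun p : Fin d × ((Fin m → Fin d) × κ) =>
            (a * y p.1) * (pvPow x m p.2.1 * c p.2.2)) t := hreorder a y
      _ ≤ excess (fun p : Fin d × ((Fin m → Fin d) × κ) =>
            (a * y p.1) * (a ^ m * (pvPow y m p.2.1 * c p.2.2))) t :=
          excess_tensor_le (fun i => mul_pos ha (hy i)) ih t
      _ = _ := by
          rw [excess_pvPow_succ_tensor]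
          congr 1
          funext p
          ring

/-- Discarding a catalyst whose entries lie between `l` and `u` costs at most the factor `l / u`. -/
theorem le_Pconv_of_excess_tensor_le {ι κ : Type*} [Fintype ι] [DecidableEq ι] [Nonempty ι]
    [Fintype κ] [Nonempty κ] {v w : ι → ℝ} (hv : ∀ i, 0 < v i) (hw : ∀ i, 0 < w i) {b : ℝ}
    (hb : 0 ≤ b) {c : κ → ℝ} {l u : ℝ} (hl : 0 < l) (hu : 0 < u) (hlc : ∀ k, l ≤ c k)
    (hcu : ∀ k, c k ≤ u)
    (h : ∀ t, excess (fun p : ι × κ => v p.1 * c p.2) t ≤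
      excess (fun p : ι × κ => b * (w p.1 * c p.2)) t) :
    l / u * b ≤ Pconv v w := by
  rw [le_Pconv_iff (fun i => (hv i).le) hw (by positivity)]
  have hconst : ∀ (z : ι → ℝ) (t : ℝ),
      excess (fun p : ι × κ => z p.1) t = Fintype.card κ * excess z t := fun z t => by
    simp [excess, Fintype.sum_prod_type, Finset.mul_sum]
  have hscaled : ∀ t, excess (fun i => u * v i) t ≤ excess (fun i => b * l * w i) t := by
    intro t
    have hchain : excess (fun p : ι × κ => u * v p.1) t ≤
        excess (fun p : ι × κ => b * l * w p.1) t := by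
      refine (excess_anti (fun p => ?_) t).trans ((h t).trans (excess_anti (fun p => ?_) t))
      · rw [mul_comm u]
        exact mul_le_mul_of_nonneg_left (hcu _) (hv _).le
      · rw [mul_assoc, mul_comm l]
        exact mul_le_mul_of_nonneg_left (mul_le_mul_of_nonneg_left (hlc _) (hw _).le) hb
    rw [hconst (fun i => u * v i), hconst (fun i => b * l * w i)] at hchain
    exact le_of_mul_le_mul_left hchain (by exact_mod_cast Fintype.card_pos)
  intro t
  have hunscaled := excess_smul_le (inv_pos.mpr hu) hscaled t
  convert hunscaled using 2
  · funext i
    field_simp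
  · funext i
    field_simp

/-- Asymptotic equivalence of multiple-copy and catalyst-assisted probabilistic
transformations: `P_M(x → y) = sup_m P(x^{⊗m} → y^{⊗m})^{1/m}` equals
`P_C(x → y) = sup_c P(x ⊗ c → y ⊗ c)`. -/
theorem multicopy_eq_catalytic_probability {d : ℕ} (x y : Fin (d + 1) → ℝ)
    (hx : IsProbVec x) (hy : IsProbVec y) (hxa : Antitone x) (hya : Antitone y)
    (hxp : ∀ i, 0 < x i) (hyp : ∀ i, 0 < y i) :
    (⨆ m : ℕ, (Pconv (pvPow x (m + 1)) (pvPow y (m + 1))) ^ ((1 : ℝ) / (m + 1))) =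
      sSup {r : ℝ | ∃ (k : ℕ) (c : Fin (k + 1) → ℝ), IsProbVec c ∧ (∀ j, 0 < c j) ∧
        r = Pconv (pvTensor x c) (pvTensor y c)} := by
  have hpow : ∀ m : ℕ, 0 < Pconv (pvPow x (m + 1)) (pvPow y (m + 1)) := fun m =>
    Pconv_pos (pvPow_pos hxp _) (pvPow_pos hyp _)
  have hbddM : BddAbove (Set.range fun m : ℕ =>
      (Pconv (pvPow x (m + 1)) (pvPow y (m + 1))) ^ ((1 : ℝ) / (m + 1))) := by
    refine ⟨1, ?_⟩
    rintro _ ⟨m, rfl⟩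
    refine Real.rpow_le_one (hpow m).le (Pconv_le_one ?_ ?_) (by positivity)
    · rw [sum_pvPow, hx.2, one_pow]
    · rw [sum_pvPow, hy.2, one_pow]
  apply le_antisymm
  · refine ciSup_le fun m => ?_
    obtain ⟨k, c, hc, hcp, hle⟩ := exists_catalyst_of_multicopy hxp hyp m
      (Real.rpow_pos_of_pos (hpow m) ((1 : ℝ) / (m + 1))) (by
        rw [← Real.rpow_natCast, ← Real.rpow_mul (hpow m).le]
        push_cast
        rw [one_div_mul_cancel (by positivity), Real.rpow_one])
    refine hle.trans (le_csSup ⟨1, ?_⟩ ⟨k, c, hc, hcp, rfl⟩)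
    rintro _ ⟨k', c', hc', -, rfl⟩
    apply Pconv_le_one
    · rw [sum_pvTensor, hx.2, hc'.2, one_mul]
    · rw [sum_pvTensor, hy.2, hc'.2, one_mul]
  · refine csSup_le ⟨_, 0, fun _ => 1, ⟨by simp, by simp⟩, by simp, rfl⟩ ?_
    rintro _ ⟨k, c, hc, hcp, rfl⟩
    set a := Pconv (pvTensor x c) (pvTensor y c) with ha_def
    have ha : 0 < a := Pconv_pos (pvTensor_pos hxp hcp) (pvTensor_pos hyp hcp)
    have hcat := (le_Pconv_iff (fun p => (pvTensor_pos hxp hcp p).le) (pvTensor_pos hyp hcp)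
      ha.le).mp ha_def.le
    obtain ⟨jmin, hmin⟩ := Finite.exists_min c
    obtain ⟨jmax, hmax⟩ := Finite.exists_max c
    have hratio : 0 < c jmin / c jmax := div_pos (hcp _) (hcp _)
    have hlim : Filter.Tendsto (fun m : ℕ => (c jmin / c jmax) ^ ((1 : ℝ) / (m + 1)) * a)
        Filter.atTop (nhds a) := by
      have hroot := (Real.continuous_const_rpow hratio.ne').continuousAt.tendsto.comp
        (tendsto_one_div_add_atTop_nhds_zero_nat (𝕜 := ℝ))
      simpa [Function.comp_def] using hroot.mul_const a
    refine le_of_tendsto' hlim fun m => ?_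
    refine le_trans ?_ (le_ciSup hbddM m)
    have hroot : (c jmin / c jmax) ^ ((1 : ℝ) / (m + 1)) * a =
        (c jmin / c jmax * a ^ (m + 1)) ^ ((1 : ℝ) / (m + 1)) := by
      rw [Real.mul_rpow hratio.le (by positivity), ← Real.rpow_natCast a, ← Real.rpow_mul ha.le]
      push_cast
      rw [mul_one_div_cancel (by positivity), Real.rpow_one]
    rw [hroot]
    exact Real.rpow_le_rpow (by positivity)
      (le_Pconv_of_excess_tensor_le (pvPow_pos hxp _) (pvPow_pos hyp _) (by positivity)
        (hcp jmin) (hcp jmax) hmin hmax (excess_pvPow_tensor_le hxp hyp ha hcat (m + 1)))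
      (by positivity)
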